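/- Let A be the adjacency matrix of the subgraph of \{0,1\}^n induced by the ball B(n,r), r \le n/2. For each 0 \le t \le r and each \lambda \in 2\mathcal{R}(n-2t, r-t+1) - (n-2t), where \mathcal{R}(m,k) is the set of roots of K_k^{(m)}, \lambda is an eigenvalue of A, and the multiplicity of any eigenvalue \lambda of A is \sum_{t : \lambda \in \Lambda_t} \left(\binom{n}{t} - \binom{n}{t-1}\right), where \Lambda_t = 2\mathcal{R}(n-2t, r-t+1) - (n-2t). Moreover every eigenvalue of A lies in \bigcup_{t=0}^{r} \Lambda_t. -/

import Mathlib

open scoped Classical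

/-- Generalized binomial coefficient `x choose l` as a real number. -/
noncomputable def gchoose (x : ℝ) (l : ℕ) : ℝ :=
  (∏ i ∈ Finset.range l, (x - i)) / (Nat.factorial l)

/-- Krawtchouk polynomial `K_j^{(n)}(x)`. -/
noncomputable def kraw (n j : ℕ) (x : ℝ) : ℝ :=
  ∑ l ∈ Finset.range (j + 1), (-1 : ℝ) ^ l * gchoose x l * gchoose ((n : ℝ) - x) (j - l)

/-- Hamming weight of a Boolean vector. -/
def wt {n : ℕ} (x : Fin n → Bool) : ℕ :=
  (Finset.univ.filter (fun i => x i = true)).card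

/-- Adjacency matrix of the subgraph of the Hamming cube induced by the
Hamming ball of radius `r` around `0`. -/
def ballAdj (n r : ℕ) :
    Matrix {x : Fin n → Bool // wt x ≤ r} {x : Fin n → Bool // wt x ≤ r} ℝ :=
  fun u v => if hammingDist u.1 v.1 = 1 then 1 else 0

/-- The set `Λ_t = 2·R(n-2t, r-t+1) - (n-2t)`, where `R(m,k)` is the set of
roots of the Krawtchouk polynomial `K_k^{(m)}`. -/
def krawLambda (n r t : ℕ) : Set ℝ :=
  {μ : ℝ | ∃ x : ℝ, kraw (n - 2 * t) (r - t + 1) x = 0 ∧ μ = 2 * x - ((n : ℝ) - 2 * t)}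

/-- `binom(n,t) - binom(n,t-1)`, with `binom(n,-1) := 0`. -/
def dimV (n t : ℕ) : ℕ :=
  if t = 0 then 1 else Nat.choose n t - Nat.choose n (t - 1)

namespace BallSpec
open Finset

/-! Krawtchouk recurrence -/

theorem gchoose_succ (x : ℝ) (l : ℕ) : ((l : ℝ) + 1) * gchoose x (l + 1) = (x - l) * gchoose x l := by
  unfold gchoose
  rw [Finset.prod_range_succ, Nat.factorial_succ]
  have : (Nat.factorial l : ℝ) ≠ 0 := by positivity
  push_cast
  field_simp

noncomputable def serF (x : ℝ) : PowerSeries ℝ := PowerSeries.mk fun l => (-1 : ℝ) ^ l * gchoose x l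
noncomputable def serG (y : ℝ) : PowerSeries ℝ := PowerSeries.mk fun l => gchoose y l

theorem kraw_coeff (m k : ℕ) (x : ℝ) :
    kraw m k x = PowerSeries.coeff k (serF x * serG ((m : ℝ) - x)) := by
  rw [PowerSeries.coeff_mul, Finset.Nat.sum_antidiagonal_eq_sum_range_succ_mk]
  simp [kraw, serF, serG]

theorem serF_ode (x : ℝ) :
    PowerSeries.derivative ℝ (serF x)
      = PowerSeries.X * PowerSeries.derivative ℝ (serF x) - PowerSeries.C x * serF x := by
  ext k
  rcases k with _ | k
  · have := gchoose_succ x 0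
    simp [PowerSeries.coeff_derivative, serF] at this ⊢
    rw [this]
  · have := gchoose_succ x (k + 1)
    simp [PowerSeries.coeff_derivative, PowerSeries.coeff_succ_X_mul, serF] at this ⊢
    linear_combination (-1) ^ k * this

theorem serG_ode (x : ℝ) :
    PowerSeries.derivative ℝ (serG x)
      = - (PowerSeries.X * PowerSeries.derivative ℝ (serG x)) + PowerSeries.C x * serG x := by
  ext k
  rcases k with _ | k
  · have := gchoose_succ x 0
    simp [PowerSeries.coeff_derivative, serG] at this ⊢
    rw [this]
  · have := gchoose_succ x (k + 1)
    simp [PowerSeries.coeff_derivative, PowerSeries.coeff_succ_X_mul, serG] at this ⊢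
    linear_combination this

theorem ser_ode (x y : ℝ) :
    PowerSeries.derivative ℝ (serF x * serG y)
      = PowerSeries.X * (PowerSeries.X * PowerSeries.derivative ℝ (serF x * serG y))
        + PowerSeries.C (y - x) * (serF x * serG y)
        - PowerSeries.C (x + y) * (PowerSeries.X * (serF x * serG y)) := by
  have hF := serF_ode x
  have hG := serG_ode y
  rw [Derivation.leibniz]
  simp only [smul_eq_mul, map_sub, map_add]
  linear_combination (1 + PowerSeries.X) * serG y * hF + (1 - PowerSeries.X) * serF x * hG

theorem kraw_zero (m : ℕ) (x : ℝ) : kraw m 0 x = 1 := by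
  simp [kraw, gchoose]

theorem kraw_one (m : ℕ) (x : ℝ) : kraw m 1 x = m - 2 * x := by
  simp [kraw, gchoose, Finset.sum_range_succ]; ring

theorem kraw_rec (m k : ℕ) (x : ℝ) :
    ((k : ℝ) + 2) * kraw m (k + 2) x
      = (m - 2 * x) * kraw m (k + 1) x - (m - k) * kraw m k x := by
  have h := congrArg (PowerSeries.coeff (k + 1)) (ser_ode x ((m : ℝ) - x))
  simp only [map_add (PowerSeries.coeff (k + 1)), map_sub (PowerSeries.coeff (k + 1)),
    PowerSeries.coeff_C_mul, PowerSeries.coeff_succ_X_mul,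
    PowerSeries.coeff_derivative] at h
  rcases k with _ | k
  · simp only [PowerSeries.coeff_zero_X_mul] at h
    simp only [← kraw_coeff] at h
    push_cast at h ⊢
    linear_combination h
  · simp only [PowerSeries.coeff_succ_X_mul, PowerSeries.coeff_derivative] at h
    simp only [← kraw_coeff] at h
    push_cast at h ⊢
    linear_combination h

/-- normalised coefficients -/
noncomputable def pco (m : ℕ) (μ : ℝ) (j : ℕ) : ℝ :=
  (-1) ^ j * kraw m j ((μ + m) / 2) / (m.descFactorial j : ℝ)

theorem pco_zero (m : ℕ) (μ : ℝ) : pco m μ 0 = 1 := by simp [pco, kraw_zero]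

theorem pco_one (m : ℕ) (μ : ℝ) (h : 1 ≤ m) : (m : ℝ) * pco m μ 1 = μ := by
  have : (m : ℝ) ≠ 0 := by positivity
  simp [pco, kraw_one]; field_simp; ring

theorem desc_cast (m j : ℕ) (h : j ≤ m) :
    ((m.descFactorial (j + 1) : ℕ) : ℝ) = ((m : ℝ) - j) * (m.descFactorial j : ℝ) := by
  rw [Nat.descFactorial_succ]; push_cast [Nat.cast_sub h]; ring

theorem desc_ne (m j : ℕ) (h : j ≤ m) : (m.descFactorial j : ℝ) ≠ 0 := by
  have : m.descFactorial j ≠ 0 := by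
    rw [Ne, Nat.descFactorial_eq_zero_iff_lt]; omega
  exact_mod_cast this

/-- general last-step identity -/
theorem pco_last (m : ℕ) (μ : ℝ) (j : ℕ) (h : j + 1 ≤ m) :
    μ * pco m μ (j + 1) - pco m μ j
      = (-1) ^ (j + 2) * (j + 2) * kraw m (j + 2) ((μ + m) / 2) / (m.descFactorial (j + 1) : ℝ) := by
  have h1 := kraw_rec m j ((μ + m) / 2)
  have hd := desc_cast m j (by omega)
  have h2 := desc_ne m j (by omega)
  have h3 : (m : ℝ) - j ≠ 0 := by
    have : ((j : ℝ) + 1) ≤ m := by exact_mod_cast h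
    intro h; linarith
  unfold pco
  rw [hd]
  field_simp
  linear_combination (-1) * (-1) ^ j * h1

theorem pco_rec (m : ℕ) (μ : ℝ) (j : ℕ) (h : j + 2 ≤ m) :
    pco m μ j + (j + 2) * (m - (j + 1)) * pco m μ (j + 2) = μ * pco m μ (j + 1) := by
  have h1 := pco_last m μ j (by omega)
  have hd := desc_cast m (j + 1) (by omega)
  have h2 := desc_ne m (j + 1) (by omega)
  have h3 : (m : ℝ) - (j + 1) ≠ 0 := by
    have : ((j : ℝ) + 2) ≤ m := by exact_mod_cast h
    intro h; linarith
  have : ((j : ℝ) + 2) * (m - (j + 1)) * pco m μ (j + 2) = (-1) ^ (j + 2) * (j + 2) * kraw m (j + 2) ((μ + m) / 2) / (m.descFactorial (j + 1) : ℝ) := by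
    unfold pco
    rw [hd]
    push_cast
    field_simp
  linarith

theorem mem_krawLambda (n r t : ℕ) (h : 2 * t ≤ n) (μ : ℝ) :
    μ ∈ krawLambda n r t ↔ kraw (n - 2 * t) (r - t + 1) ((μ + ((n - 2 * t : ℕ) : ℝ)) / 2) = 0 := by
  unfold krawLambda
  rw [Nat.cast_sub h]
  push_cast
  constructor
  · rintro ⟨x, hx, rfl⟩
    rw [← hx]; congr 1; ring
  · intro hx
    exact ⟨_, hx, by ring⟩

/-- Membership in `Λ_t` as last step of the recurrence. -/
theorem mem_iff_last (n r t : ℕ) (h : 2 * r ≤ n) (ht : t ≤ r) (μ : ℝ) :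
    μ ∈ krawLambda n r t ↔
      (if r - t = 0 then 0 else pco (n - 2 * t) μ (r - t - 1)) - μ * pco (n - 2 * t) μ (r - t) = 0 := by
  rw [mem_krawLambda n r t (by omega)]
  rcases hk : r - t with _ | k
  · simp [kraw_one, pco_zero]
    constructor <;> intro h <;> linarith
  · have h1 := pco_last (n - 2 * t) μ k (by omega)
    have h2 := desc_ne (n - 2 * t) (k + 1) (by omega)
    have e : pco (n - 2 * t) μ k - μ * pco (n - 2 * t) μ (k + 1) = -(μ * pco (n - 2 * t) μ (k + 1) - pco (n - 2 * t) μ k) := by ring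
    simp only [Nat.add_one_ne_zero, if_false, Nat.add_sub_cancel]
    rw [e, h1]
    have h4 : (k : ℝ) + 2 ≠ 0 := by positivity
    rw [neg_eq_zero, div_eq_zero_iff]
    simp only [h2, or_false, mul_eq_zero, h4, false_or]
    simp

/-! Up and down operators -/

variable {n : ℕ}

def U (n : ℕ) : (Finset (Fin n) → ℝ) →ₗ[ℝ] (Finset (Fin n) → ℝ) where
  toFun f S := ∑ i ∈ S, f (S.erase i)
  map_add' f g := by ext S; simp [Finset.sum_add_distrib]
  map_smul' c f := by ext S; simp [Finset.mul_sum]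

def D (n : ℕ) : (Finset (Fin n) → ℝ) →ₗ[ℝ] (Finset (Fin n) → ℝ) where
  toFun f S := ∑ i ∈ Sᶜ, f (insert i S)
  map_add' f g := by ext S; simp [Finset.sum_add_distrib]
  map_smul' c f := by ext S; simp [Finset.mul_sum]

theorem U_apply (f : Finset (Fin n) → ℝ) (S) : U n f S = ∑ i ∈ S, f (S.erase i) := rfl
theorem D_apply (f : Finset (Fin n) → ℝ) (S) : D n f S = ∑ i ∈ Sᶜ, f (insert i S) := rfl

theorem adj (f g : Finset (Fin n) → ℝ) : ∑ S, U n f S * g S = ∑ S, f S * D n g S := by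
  simp only [U_apply, D_apply, Finset.sum_mul, Finset.mul_sum]
  rw [Finset.sum_sigma', Finset.sum_sigma']
  refine Finset.sum_bij' (fun p _ => ⟨p.1.erase p.2, p.2⟩) (fun p _ => ⟨insert p.2 p.1, p.2⟩) ?_ ?_ ?_ ?_ ?_
  · rintro ⟨S, i⟩ h; simp
  · rintro ⟨S, i⟩ h; simp
  · rintro ⟨S, i⟩ h; simp at h; simp [Finset.insert_erase h]
  · rintro ⟨S, i⟩ h; simp at h; simp [Finset.erase_insert h]
  · rintro ⟨S, i⟩ h; simp at h; simp [Finset.insert_erase h]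

theorem comm_apply (f : Finset (Fin n) → ℝ) (S : Finset (Fin n)) :
    D n (U n f) S = U n (D n f) S + ((n : ℝ) - 2 * S.card) * f S := by
  have h1 : D n (U n f) S
      = ∑ i ∈ Sᶜ, (f S + ∑ j ∈ S, f ((insert i S).erase j)) := by
    rw [D_apply]
    refine Finset.sum_congr rfl fun i hi => ?_
    simp only [Finset.mem_compl] at hi
    rw [U_apply, Finset.sum_insert hi, Finset.erase_insert hi]
  have h2 : U n (D n f) S
      = ∑ j ∈ S, (f S + ∑ i ∈ Sᶜ, f ((insert i S).erase j)) := by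
    rw [U_apply]
    refine Finset.sum_congr rfl fun j hj => ?_
    rw [D_apply]
    have : (S.erase j)ᶜ = insert j Sᶜ := by ext; simp; try tauto
    rw [this, Finset.sum_insert (by simpa using hj), Finset.insert_erase hj]
    congr 1
    refine Finset.sum_congr rfl fun i hi => ?_
    simp only [Finset.mem_compl] at hi
    rw [Finset.erase_insert_of_ne]
    rintro rfl; exact hi hj
  rw [h1, h2, Finset.sum_add_distrib, Finset.sum_add_distrib, Finset.sum_comm]
  simp only [Finset.sum_const, Finset.card_compl, Fintype.card_fin, nsmul_eq_mul]
  have : S.card ≤ n := by simpa using Finset.card_le_univ S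
  push_cast [Nat.cast_sub this]
  ring

def L (n i : ℕ) : Submodule ℝ (Finset (Fin n) → ℝ) where
  carrier := {f | ∀ S, S.card ≠ i → f S = 0}
  add_mem' {f g} hf hg S h := by simp [hf S h, hg S h]
  zero_mem' S h := rfl
  smul_mem' c f hf S h := by simp [hf S h]

theorem mem_L {i : ℕ} {f : Finset (Fin n) → ℝ} : f ∈ L n i ↔ ∀ S, S.card ≠ i → f S = 0 := Iff.rfl

theorem U_mem {i : ℕ} {f : Finset (Fin n) → ℝ} (hf : f ∈ L n i) : U n f ∈ L n (i + 1) := by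
  intro S hS
  rw [U_apply]
  refine Finset.sum_eq_zero fun j hj => hf _ ?_
  have := Finset.card_erase_add_one hj
  omega

theorem D_mem {i : ℕ} {f : Finset (Fin n) → ℝ} (hf : f ∈ L n (i + 1)) : D n f ∈ L n i := by
  intro S hS
  rw [D_apply]
  refine Finset.sum_eq_zero fun j hj => hf _ ?_
  simp only [Finset.mem_compl] at hj
  rw [Finset.card_insert_of_notMem hj]
  omega

theorem D_zero {f : Finset (Fin n) → ℝ} (hf : f ∈ L n 0) : D n f = 0 := by
  ext S
  rw [D_apply]
  refine Finset.sum_eq_zero fun j hj => hf _ ?_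
  simp

theorem comm_L {i : ℕ} {f : Finset (Fin n) → ℝ} (hf : f ∈ L n i) :
    D n (U n f) = U n (D n f) + ((n : ℝ) - 2 * i) • f := by
  ext S
  rw [comm_apply]
  by_cases h : S.card = i
  · simp [h]
  · simp [hf S h]

theorem DU_inj {i : ℕ} (hi : 2 * i < n) {f : Finset (Fin n) → ℝ} (hf : f ∈ L n i)
    (h : D n (U n f) = 0) : f = 0 := by
  have h1 := comm_L hf
  rw [h] at h1
  have h2 : ∑ S, D n f S * D n f S + ((n : ℝ) - 2 * i) * ∑ S, f S * f S = 0 := by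
    rw [← adj, Finset.mul_sum, ← Finset.sum_add_distrib]
    refine Finset.sum_eq_zero fun S _ => ?_
    have := congrFun h1 S
    simp at this
    linear_combination (- f S) * this
  have h3 : 0 ≤ ∑ S, D n f S * D n f S := Finset.sum_nonneg fun _ _ => mul_self_nonneg _
  have h4 : 0 ≤ ∑ S, f S * f S := Finset.sum_nonneg fun _ _ => mul_self_nonneg _
  have h5 : (0 : ℝ) < (n : ℝ) - 2 * i := by
    have : (2 * i : ℝ) < n := by exact_mod_cast hi
    linarith
  have h6 : ∑ S, f S * f S = 0 := by nlinarith
  rw [Finset.sum_eq_zero_iff_of_nonneg (fun _ _ => mul_self_nonneg _)] at h6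
  ext S
  simpa using h6 S (Finset.mem_univ _)

theorem DU_surj {i : ℕ} (hi : 2 * i < n) {f : Finset (Fin n) → ℝ} (hf : f ∈ L n i) :
    ∃ g ∈ L n i, D n (U n g) = f := by
  let φ : L n i →ₗ[ℝ] L n i := (D n ∘ₗ U n).restrict (fun f hf => D_mem (U_mem hf))
  have hinj : Function.Injective φ := by
    rw [injective_iff_map_eq_zero]
    rintro ⟨g, hg⟩ h
    have := DU_inj hi hg (congrArg Subtype.val h)
    simpa using this
  obtain ⟨g, hg⟩ := (LinearMap.injective_iff_surjective.mp hinj) ⟨f, hf⟩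
  exact ⟨g.1, g.2, congrArg Subtype.val hg⟩

def H (n t : ℕ) : Submodule ℝ (Finset (Fin n) → ℝ) := L n t ⊓ LinearMap.ker (D n)

theorem mem_H {t : ℕ} {f : Finset (Fin n) → ℝ} : f ∈ H n t ↔ f ∈ L n t ∧ D n f = 0 := by
  simp [H]

theorem finrank_L (n i : ℕ) : Module.finrank ℝ (L n i) = n.choose i := by
  let e : L n i ≃ₗ[ℝ] ({S : Finset (Fin n) // S.card = i} → ℝ) :=
    { toFun := fun f S => f.1 S.1
      invFun := fun g => ⟨fun S => if h : S.card = i then g ⟨S, h⟩ else 0, fun S h => by simp [h]⟩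
      map_add' := fun f g => rfl
      map_smul' := fun c f => rfl
      left_inv := fun f => by
        ext S
        by_cases h : S.card = i
        · simp [h]
        · simp [h, f.2 S h]
      right_inv := fun g => by ext S; simp [S.2] }
  rw [e.finrank_eq, Module.finrank_fintype_fun_eq_card, Fintype.card_finset_len, Fintype.card_fin]

theorem finrank_H (t : ℕ) (ht : 2 * t ≤ n) : Module.finrank ℝ (H n t) = dimV n t := by
  rcases t with _ | t
  · have : H n 0 = L n 0 := by
      ext f; rw [mem_H]; exact ⟨fun h => h.1, fun h => ⟨h, D_zero h⟩⟩
    rw [this, finrank_L]; simp [dimV]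
  · let φ : L n (t + 1) →ₗ[ℝ] L n t := (D n).restrict (fun f hf => D_mem hf)
    have hs : Function.Surjective φ := by
      rintro ⟨f, hf⟩
      obtain ⟨g, hg, h⟩ := DU_surj (by omega) hf
      exact ⟨⟨U n g, U_mem hg⟩, Subtype.ext h⟩
    have h1 := LinearMap.finrank_range_add_finrank_ker φ
    rw [LinearMap.range_eq_top.mpr hs, finrank_top, finrank_L, finrank_L] at h1
    have h2 : Module.finrank ℝ (LinearMap.ker φ) = Module.finrank ℝ (H n (t + 1)) := by
      let e : LinearMap.ker φ ≃ₗ[ℝ] H n (t + 1) :=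
        { toFun := fun f => ⟨f.1.1, mem_H.mpr ⟨f.1.2, congrArg Subtype.val f.2⟩⟩
          invFun := fun f => ⟨⟨f.1, (mem_H.mp f.2).1⟩, Subtype.ext (mem_H.mp f.2).2⟩
          map_add' := fun f g => rfl
          map_smul' := fun c f => rfl
          left_inv := fun f => rfl
          right_inv := fun g => rfl }
      exact e.finrank_eq
    rw [← h2]
    simp [dimV]
    omega

theorem dimV_pos (t : ℕ) (ht : 2 * t ≤ n) : 0 < dimV n t := by
  rcases t with _ | t
  · simp [dimV]
  · simp only [dimV, Nat.add_one_ne_zero, if_false, Nat.add_sub_cancel]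
    have h := Nat.choose_succ_right_eq n t
    have h1 : 0 < n.choose t := Nat.choose_pos (by omega)
    have : n.choose t < n.choose (t + 1) := by
      by_contra hc
      push Not at hc
      have h2 : n.choose (t+1) * (t + 1) ≤ n.choose t * (t + 1) := Nat.mul_le_mul_right _ hc
      rw [h] at h2
      have := Nat.le_of_mul_le_mul_left h2 h1
      omega
    omega

theorem DUpow {t : ℕ} {f : Finset (Fin n) → ℝ} (hf : f ∈ H n t) (j : ℕ) :
    (U n ^ j) f ∈ L n (t + j) ∧
    D n ((U n ^ (j + 1)) f) = ((j + 1 : ℝ) * ((n : ℝ) - 2 * t - j)) • (U n ^ j) f := by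
  rw [mem_H] at hf
  induction j with
  | zero =>
    refine ⟨by simpa using hf.1, ?_⟩
    simp [comm_L hf.1, hf.2]
  | succ j ih =>
    have h1 : (U n ^ (j + 1)) f ∈ L n (t + (j + 1)) := by
      rw [pow_succ']; exact U_mem ih.1
    refine ⟨h1, ?_⟩
    rw [pow_succ' (U n) (j + 1), Module.End.mul_apply, comm_L h1, ih.2, map_smul,
      ← Module.End.mul_apply, ← pow_succ', ← add_smul]
    congr 1
    push_cast
    ring

/-! Decomposition -/

def BB (n r : ℕ) : Submodule ℝ (Finset (Fin n) → ℝ) where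
  carrier := {f | ∀ S, r < S.card → f S = 0}
  add_mem' {f g} hf hg S h := by simp [hf S h, hg S h]
  zero_mem' S h := rfl
  smul_mem' c f hf S h := by simp [hf S h]

theorem L_le_BB {i r : ℕ} (h : i ≤ r) : L n i ≤ BB n r := by
  intro f hf S hS
  exact hf S (by omega)

theorem BB_L_disj {r : ℕ} {f g : Finset (Fin n) → ℝ} (hf : f ∈ BB n r) (hg : g ∈ L n (r + 1))
    (h : f + g = 0) : f = 0 ∧ g = 0 := by
  have hf0 : f = 0 := by
    ext S
    by_cases hS : r < S.card
    · exact hf S hS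
    · have h1 := congrFun h S
      simp only [Pi.add_apply, hg S (by omega)] at h1
      simpa using h1
  subst hf0
  simpa using h

theorem level_span (i : ℕ) (hi : 2 * i ≤ n) (f : Finset (Fin n) → ℝ) (hf : f ∈ L n i) :
    ∃ c : ℕ → Finset (Fin n) → ℝ, (∀ t, c t ∈ H n t) ∧
      f = ∑ t ∈ range (i + 1), (U n ^ (i - t)) (c t) := by
  induction i generalizing f with
  | zero =>
    refine ⟨fun t => if t = 0 then f else 0, fun t => ?_, by simp⟩
    by_cases h : t = 0
    · subst h; simp [mem_H, hf, D_zero hf]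
    · simp [h]
  | succ i ih =>
    obtain ⟨g, hg, hgf⟩ := DU_surj (i := i) (by omega) (D_mem hf)
    obtain ⟨c, hc, hgc⟩ := ih (by omega) g hg
    refine ⟨fun t => if t = i + 1 then f - U n g else c t, fun t => ?_, ?_⟩
    · by_cases h : t = i + 1
      · subst h
        simp only [if_true]
        rw [mem_H]
        exact ⟨Submodule.sub_mem _ hf (U_mem hg), by simp [hgf]⟩
      · simpa [h] using hc t
    · rw [Finset.sum_range_succ]
      have : ∑ t ∈ range (i + 1), (U n ^ (i + 1 - t)) (if t = i + 1 then f - U n g else c t) = U n g := by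
        conv_rhs => rw [hgc, map_sum]
        refine Finset.sum_congr rfl fun t ht => ?_
        rw [Finset.mem_range] at ht
        rw [if_neg (by omega), show i + 1 - t = (i - t) + 1 by omega, pow_succ', Module.End.mul_apply]
      rw [this]
      simp

theorem level_mem (i : ℕ) (c : ℕ → Finset (Fin n) → ℝ) (hc : ∀ t, c t ∈ H n t) :
    ∑ t ∈ range (i + 1), (U n ^ (i - t)) (c t) ∈ L n i := by
  refine Submodule.sum_mem _ fun t ht => ?_
  rw [Finset.mem_range] at ht
  have := (DUpow (hc t) (i - t)).1
  rwa [show t + (i - t) = i by omega] at this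

theorem level_indep (i : ℕ) (hi : 2 * i ≤ n) (c : ℕ → Finset (Fin n) → ℝ) (hc : ∀ t, c t ∈ H n t)
    (h : ∑ t ∈ range (i + 1), (U n ^ (i - t)) (c t) = 0) : ∀ t ≤ i, c t = 0 := by
  induction i with
  | zero =>
    intro t ht
    obtain rfl : t = 0 := by omega
    simpa using h
  | succ i ih =>
    rw [Finset.sum_range_succ] at h
    have e : ∑ t ∈ range (i + 1), (U n ^ (i + 1 - t)) (c t)
        = U n (∑ t ∈ range (i + 1), (U n ^ (i - t)) (c t)) := by
      rw [map_sum]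
      refine Finset.sum_congr rfl fun t ht => ?_
      rw [Finset.mem_range] at ht
      rw [show i + 1 - t = (i - t) + 1 by omega, pow_succ', Module.End.mul_apply]
    rw [e] at h
    simp only [Nat.sub_self, pow_zero, Module.End.one_apply] at h
    have h1 := congrArg (D n) h
    rw [map_add, (mem_H.mp (hc (i + 1))).2, add_zero, map_zero] at h1
    have h2 := DU_inj (by omega) (level_mem i c hc) h1
    have h3 := ih (by omega) h2
    intro t ht
    rcases Nat.lt_or_ge i t with h4 | h4
    · obtain rfl : t = i + 1 := by omega
      rw [h2] at h
      simpa using h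
    · exact h3 t h4

noncomputable def Phi (n r : ℕ) (c : ℕ → ℕ → Finset (Fin n) → ℝ) : Finset (Fin n) → ℝ :=
  ∑ t ∈ range (r + 1), ∑ j ∈ range (r - t + 1), (U n ^ j) (c t j)

theorem Phi_succ (r : ℕ) (c : ℕ → ℕ → Finset (Fin n) → ℝ) :
    Phi n (r + 1) c = Phi n r c + ∑ t ∈ range (r + 1 + 1), (U n ^ (r + 1 - t)) (c t (r + 1 - t)) := by
  unfold Phi
  rw [Finset.sum_range_succ, Finset.sum_range_succ _ (r + 1), ← add_assoc, ← Finset.sum_add_distrib]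
  congr 1
  · refine Finset.sum_congr rfl fun t ht => ?_
    rw [Finset.mem_range] at ht
    rw [show r + 1 - t = r - t + 1 by omega, Finset.sum_range_succ _ (r - t + 1)]
  · simp

theorem Phi_mem (r : ℕ) (c : ℕ → ℕ → Finset (Fin n) → ℝ) (hc : ∀ t j, c t j ∈ H n t) :
    Phi n r c ∈ BB n r := by
  refine Submodule.sum_mem _ fun t ht => Submodule.sum_mem _ fun j hj => ?_
  rw [Finset.mem_range] at ht hj
  exact L_le_BB (by omega) (DUpow (hc t j) j).1

theorem Phi_indep (r : ℕ) (hr : 2 * r ≤ n) (c : ℕ → ℕ → Finset (Fin n) → ℝ)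
    (hc : ∀ t j, c t j ∈ H n t) (h : Phi n r c = 0) : ∀ t j, t + j ≤ r → c t j = 0 := by
  induction r with
  | zero =>
    intro t j ht
    obtain rfl : t = 0 := by omega
    obtain rfl : j = 0 := by omega
    simpa [Phi] using h
  | succ r ih =>
    rw [Phi_succ] at h
    obtain ⟨h1, h2⟩ := BB_L_disj (Phi_mem r c hc)
      (level_mem (r + 1) (fun t => c t (r + 1 - t)) (fun t => hc _ _)) h
    have h3 := ih (by omega) h1
    have h4 := level_indep (r + 1) hr (fun t => c t (r + 1 - t)) (fun t => hc _ _) h2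
    intro t j htj
    by_cases h5 : t + j ≤ r
    · exact h3 t j h5
    · have := h4 t (by omega)
      rwa [show r + 1 - t = j by omega] at this

theorem Phi_congr (r : ℕ) (c d : ℕ → ℕ → Finset (Fin n) → ℝ)
    (h : ∀ t j, t + j ≤ r → c t j = d t j) : Phi n r c = Phi n r d := by
  unfold Phi
  refine Finset.sum_congr rfl fun t ht => Finset.sum_congr rfl fun j hj => ?_
  rw [Finset.mem_range] at ht hj
  rw [h t j (by omega)]

theorem Phi_span (r : ℕ) (hr : 2 * r ≤ n) (f : Finset (Fin n) → ℝ) (hf : f ∈ BB n r) :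
    ∃ c : ℕ → ℕ → Finset (Fin n) → ℝ, (∀ t j, c t j ∈ H n t) ∧ f = Phi n r c := by
  induction r generalizing f with
  | zero =>
    have hf : f ∈ L n 0 := fun S hS => hf S (by omega)
    refine ⟨fun t j => if t = 0 then f else 0, fun t j => ?_, by simp [Phi]⟩
    by_cases h : t = 0
    · subst h; simp [mem_H, hf, D_zero hf]
    · simp [h]
  | succ r ih =>
    obtain ⟨c, hc, hcf⟩ := ih (by omega) (fun S => if S.card ≤ r then f S else 0)
      (fun S hS => if_neg (by omega))
    obtain ⟨d, hd, hdf⟩ := level_span (r + 1) hr (fun S => if S.card = r + 1 then f S else 0)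
      (fun S hS => if_neg hS)
    refine ⟨fun t j => if t + j ≤ r then c t j else d t, fun t j => ?_, ?_⟩
    · by_cases h : t + j ≤ r
      · simpa [h] using hc t j
      · simpa [h] using hd t
    · rw [Phi_succ, Phi_congr r _ c (fun t j h => if_pos h), ← hcf]
      have : ∑ t ∈ range (r + 1 + 1), (U n ^ (r + 1 - t))
          (if t + (r + 1 - t) ≤ r then c t (r + 1 - t) else d t)
          = ∑ t ∈ range (r + 1 + 1), (U n ^ (r + 1 - t)) (d t) := by
        refine Finset.sum_congr rfl fun t ht => ?_
        rw [Finset.mem_range] at ht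
        rw [if_neg (by omega)]
      rw [this, ← hdf]
      ext S
      simp only [Pi.add_apply]
      by_cases h1 : S.card ≤ r
      · simp [h1, show S.card ≠ r + 1 by omega]
      · by_cases h2 : S.card = r + 1
        · simp [h2]
        · simp [h1, h2, hf S (by omega)]

/-- coefficients of the residual -/
noncomputable def res (n r : ℕ) (μ : ℝ) (c : ℕ → ℕ → Finset (Fin n) → ℝ) (t j : ℕ) :
    Finset (Fin n) → ℝ :=
  (if j = 0 then 0 else c t (j - 1))
    + (if t + j < r then ((j + 1 : ℝ) * ((n : ℝ) - 2 * t - j)) • c t (j + 1) else 0)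
    - μ • c t j

theorem res_mem (r : ℕ) (μ : ℝ) (c : ℕ → ℕ → Finset (Fin n) → ℝ)
    (hc : ∀ t j, c t j ∈ H n t) (t j : ℕ) : res n r μ c t j ∈ H n t := by
  unfold res
  refine Submodule.sub_mem _ (Submodule.add_mem _ ?_ ?_) (Submodule.smul_mem _ _ (hc _ _))
  · split_ifs
    · exact zero_mem _
    · exact hc _ _
  · split_ifs
    · exact Submodule.smul_mem _ _ (hc _ _)
    · exact zero_mem _

theorem single_eq (r t : ℕ) (ht : t ≤ r) (μ : ℝ) (c : ℕ → ℕ → Finset (Fin n) → ℝ)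
    (hc : ∀ t j, c t j ∈ H n t) :
    U n (∑ j ∈ range (r - t + 1), (U n ^ j) (c t j)) + D n (∑ j ∈ range (r - t + 1), (U n ^ j) (c t j))
      - μ • (∑ j ∈ range (r - t + 1), (U n ^ j) (c t j))
    = ∑ j ∈ range (r - t + 1), (U n ^ j) (res n r μ c t j)
      + (U n ^ (r + 1 - t)) (c t (r - t)) := by
  have h1 : U n (∑ j ∈ range (r - t + 1), (U n ^ j) (c t j))
      = ∑ j ∈ range (r - t + 1), (U n ^ j) (if j = 0 then 0 else c t (j - 1))
        + (U n ^ (r + 1 - t)) (c t (r - t)) := by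
    have : (U n ^ (r + 1 - t)) (c t (r - t))
      = (U n ^ (r - t + 1)) (if r - t + 1 = 0 then 0 else c t (r - t + 1 - 1)) := by
      simp [show r + 1 - t = r - t + 1 by omega]
    rw [this, ← Finset.sum_range_succ (fun j => (U n ^ j) (if j = 0 then 0 else c t (j - 1))),
      Finset.sum_range_succ' _ (r - t + 1), map_sum]
    simp [pow_succ']
  have h2 : D n (∑ j ∈ range (r - t + 1), (U n ^ j) (c t j))
      = ∑ j ∈ range (r - t + 1), (U n ^ j)
        (if t + j < r then ((j + 1 : ℝ) * ((n : ℝ) - 2 * t - j)) • c t (j + 1) else 0) := by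
    rw [Finset.sum_range_succ', map_add, map_sum, Finset.sum_range_succ]
    congr 1
    · refine Finset.sum_congr rfl fun j hj => ?_
      rw [Finset.mem_range] at hj
      rw [if_pos (by omega), (DUpow (hc t (j + 1)) j).2, map_smul]
    · rw [if_neg (by omega)]
      simp [(mem_H.mp (hc t 0)).2]
  rw [h1, h2, Finset.smul_sum]
  simp only [res, map_sub, map_add, map_smul, Finset.sum_sub_distrib, Finset.sum_add_distrib]
  abel

theorem Phi_eq (r : ℕ) (μ : ℝ) (c : ℕ → ℕ → Finset (Fin n) → ℝ)
    (hc : ∀ t j, c t j ∈ H n t) :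
    ∃ R ∈ L n (r + 1), U n (Phi n r c) + D n (Phi n r c) - μ • Phi n r c
      = Phi n r (res n r μ c) + R := by
  refine ⟨∑ t ∈ range (r + 1), (U n ^ (r + 1 - t)) (c t (r - t)), ?_, ?_⟩
  · refine Submodule.sum_mem _ fun t ht => ?_
    rw [Finset.mem_range] at ht
    have := (DUpow (hc t (r - t)) (r + 1 - t)).1
    rwa [show t + (r + 1 - t) = r + 1 by omega] at this
  · unfold Phi
    rw [map_sum, map_sum, Finset.smul_sum, ← Finset.sum_add_distrib, ← Finset.sum_sub_distrib,
      ← Finset.sum_add_distrib]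
    refine Finset.sum_congr rfl fun t ht => ?_
    rw [Finset.mem_range] at ht
    exact single_eq r t (by omega) μ c hc

/-- Eigenspace in the cube. -/
def EE (n r : ℕ) (μ : ℝ) : Submodule ℝ (Finset (Fin n) → ℝ) where
  carrier := {f | f ∈ BB n r ∧ ∀ S, S.card ≤ r → U n f S + D n f S = μ * f S}
  add_mem' {f g} hf hg := ⟨Submodule.add_mem _ hf.1 hg.1, fun S h => by
    have h1 := hf.2 S h
    have h2 := hg.2 S h
    simp only [map_add, Pi.add_apply]
    linarith⟩
  zero_mem' := ⟨Submodule.zero_mem _, fun S h => by simp⟩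
  smul_mem' a f hf := ⟨Submodule.smul_mem _ _ hf.1, fun S h => by
    have h1 := hf.2 S h
    simp only [map_smul, Pi.smul_apply, smul_eq_mul]
    linear_combination a * h1⟩

theorem Phi_mem_EE (r : ℕ) (hr : 2 * r ≤ n) (μ : ℝ) (c : ℕ → ℕ → Finset (Fin n) → ℝ)
    (hc : ∀ t j, c t j ∈ H n t) :
    Phi n r c ∈ EE n r μ ↔ ∀ t j, t + j ≤ r → res n r μ c t j = 0 := by
  obtain ⟨R, hR, h⟩ := Phi_eq r μ c hc
  constructor
  · intro hE
    apply Phi_indep r hr _ (res_mem r μ c hc)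
    ext S
    by_cases hS : r < S.card
    · exact Phi_mem r _ (res_mem r μ c hc) S hS
    · have h1 := congrFun h S
      have h2 := hE.2 S (by omega)
      simp only [Pi.add_apply, Pi.sub_apply, Pi.smul_apply, smul_eq_mul, hR S (by omega)] at h1
      simp only [Pi.zero_apply]
      linarith
  · intro h0
    refine ⟨Phi_mem r c hc, fun S hS => ?_⟩
    have h1 := congrFun h S
    have h2 : Phi n r (res n r μ c) = 0 := by
      rw [Phi_congr r _ (fun _ _ => 0) h0]; simp [Phi]
    rw [h2] at h1
    simp only [Pi.add_apply, Pi.sub_apply, Pi.smul_apply, smul_eq_mul, hR S (by omega),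
      Pi.zero_apply] at h1
    linarith

theorem res_sol (r : ℕ) (hr : 2 * r ≤ n) (μ : ℝ) (c : ℕ → ℕ → Finset (Fin n) → ℝ)
    (h : ∀ t j, t + j ≤ r → res n r μ c t j = 0) (t : ℕ) (ht : t ≤ r) :
    (∀ j, t + j ≤ r → c t j = pco (n - 2 * t) μ j • c t 0) ∧ (μ ∉ krawLambda n r t → c t 0 = 0) := by
  have hm : ((n - 2 * t : ℕ) : ℝ) = (n : ℝ) - 2 * t := by
    push_cast [Nat.cast_sub (show 2 * t ≤ n by omega)]; ring
  have key : ∀ j, t + j ≤ r → c t j = pco (n - 2 * t) μ j • c t 0 := by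
    intro j
    induction j using Nat.strong_induction_on with
    | _ j ih =>
      intro hj
      rcases j with _ | _ | j
      · simp [pco_zero]
      · have h1 := h t 0 (by omega)
        have h2 := pco_one (n - 2 * t) μ (by omega)
        have h3 : ((n - 2 * t : ℕ) : ℝ) ≠ 0 := by
          have : n - 2 * t ≠ 0 := by omega
          exact_mod_cast this
        simp only [res, if_true, if_pos (show t + 0 < r by omega)] at h1
        ext S
        have h4 := congrFun h1 S
        simp only [Pi.add_apply, Pi.sub_apply, Pi.smul_apply, smul_eq_mul, Pi.zero_apply] at h4 ⊢
        apply mul_left_cancel₀ h3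
        rw [← mul_assoc, h2, hm]
        push_cast at h4
        simp only [zero_add] at h4 ⊢
        linear_combination h4
      · have h1 := h t (j + 1) (by omega)
        have h2 := pco_rec (n - 2 * t) μ j (by omega)
        have h3 : ((j : ℝ) + 2) * (((n - 2 * t : ℕ) : ℝ) - (j + 1)) ≠ 0 := by
          have : ((j + 2 : ℕ) : ℝ) ≤ ((n - 2 * t : ℕ) : ℝ) := by exact_mod_cast (by omega)
          push_cast [-Nat.cast_sub] at this
          refine mul_ne_zero (by positivity) (fun h => by linarith)
        have i1 := ih j (by omega) (by omega)
        have i2 := ih (j + 1) (by omega) (by omega)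
        simp only [res, Nat.add_one_ne_zero, if_false, Nat.add_sub_cancel,
          if_pos (show t + (j + 1) < r by omega)] at h1
        rw [i1, i2] at h1
        ext S
        have h4 := congrFun h1 S
        simp only [Pi.add_apply, Pi.sub_apply, Pi.smul_apply, smul_eq_mul, Pi.zero_apply] at h4 ⊢
        apply mul_left_cancel₀ h3
        rw [hm] at h2 ⊢
        push_cast at h4
        simp only [add_assoc, one_add_one_eq_two] at h4 h2 ⊢
        linear_combination h4 - h2 * c t 0 S
  refine ⟨key, fun hμ => ?_⟩
  rw [mem_iff_last n r t hr ht] at hμ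
  have h1 := h t (r - t) (by omega)
  simp only [res, if_neg (show ¬ (t + (r - t) < r) by omega)] at h1
  rw [key (r - t) (by omega)] at h1
  have h2 : (if r - t = 0 then 0 else c t (r - t - 1))
      = (if r - t = 0 then 0 else pco (n - 2 * t) μ (r - t - 1)) • c t 0 := by
    split_ifs
    · simp
    · rw [key (r - t - 1) (by omega)]
  rw [h2, add_zero, smul_smul, ← sub_smul] at h1
  exact (smul_eq_zero.mp h1).resolve_left hμ

theorem res_ok (r : ℕ) (hr : 2 * r ≤ n) (μ : ℝ) (h : ℕ → Finset (Fin n) → ℝ)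
    (h0 : ∀ t ≤ r, μ ∉ krawLambda n r t → h t = 0) :
    ∀ t j, t + j ≤ r → res n r μ (fun t j => pco (n - 2 * t) μ j • h t) t j = 0 := by
  intro t j htj
  have hm : ((n - 2 * t : ℕ) : ℝ) = (n : ℝ) - 2 * t := by
    push_cast [Nat.cast_sub (show 2 * t ≤ n by omega)]; ring
  by_cases hμ : μ ∈ krawLambda n r t
  · unfold res
    by_cases hj : t + j < r
    · rw [if_pos hj]
      rcases j with _ | j
      · have h2 := pco_one (n - 2 * t) μ (by omega)
        rw [hm] at h2
        ext S
        simp only [if_true, Pi.add_apply, Pi.sub_apply, Pi.smul_apply, smul_eq_mul, Pi.zero_apply,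
          pco_zero, zero_add]
        push_cast
        linear_combination h2 * h t S
      · have h2 := pco_rec (n - 2 * t) μ j (by omega)
        rw [hm] at h2
        ext S
        simp only [Nat.add_one_ne_zero, if_false, Pi.add_apply, Pi.sub_apply, Pi.smul_apply,
          smul_eq_mul, Pi.zero_apply, Nat.add_sub_cancel]
        push_cast
        simp only [add_assoc, one_add_one_eq_two] at h2 ⊢
        linear_combination h2 * h t S
    · rw [mem_iff_last n r t hr (by omega)] at hμ
      rw [if_neg hj]
      obtain rfl : j = r - t := by omega
      have h2 : (if r - t = 0 then 0 else pco (n - 2 * t) μ (r - t - 1) • h t)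
          = (if r - t = 0 then 0 else pco (n - 2 * t) μ (r - t - 1)) • h t := by
        split_ifs
        · simp
        · rfl
      rw [h2, add_zero, smul_smul, ← sub_smul, hμ, zero_smul]
  · simp [res, h0 t (by omega) hμ]

noncomputable def TT (n r : ℕ) (μ : ℝ) : Finset ℕ :=
  (Finset.range (r + 1)).filter (fun t => μ ∈ krawLambda n r t)

theorem mem_TT (r : ℕ) (μ : ℝ) (t : ℕ) : t ∈ TT n r μ ↔ t ≤ r ∧ μ ∈ krawLambda n r t := by
  simp [TT, Nat.lt_succ_iff]

noncomputable def iota (n r : ℕ) (μ : ℝ) :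
    ((t : TT n r μ) → H n t.1) →ₗ[ℝ] (ℕ → Finset (Fin n) → ℝ) :=
  LinearMap.pi fun t =>
    if ht : t ∈ TT n r μ then
      (H n t).subtype ∘ₗ LinearMap.proj (R := ℝ) (φ := fun t : TT n r μ => H n t.1) ⟨t, ht⟩
    else 0

theorem iota_pos (r : ℕ) (μ : ℝ) (h : (t : TT n r μ) → H n t.1) (t : ℕ) (ht : t ∈ TT n r μ) :
    iota n r μ h t = (h ⟨t, ht⟩ : Finset (Fin n) → ℝ) := by
  simp [iota, ht]

theorem iota_neg (r : ℕ) (μ : ℝ) (h : (t : TT n r μ) → H n t.1) (t : ℕ) (ht : t ∉ TT n r μ) :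
    iota n r μ h t = 0 := by
  simp [iota, ht]

theorem iota_mem (r : ℕ) (μ : ℝ) (h : (t : TT n r μ) → H n t.1) (t : ℕ) :
    iota n r μ h t ∈ H n t := by
  by_cases ht : t ∈ TT n r μ
  · rw [iota_pos r μ h t ht]; exact (h ⟨t, ht⟩).2
  · rw [iota_neg r μ h t ht]; exact zero_mem _

noncomputable def Psi (n r : ℕ) (μ : ℝ) : (ℕ → Finset (Fin n) → ℝ) →ₗ[ℝ] (Finset (Fin n) → ℝ) where
  toFun h := Phi n r (fun t j => pco (n - 2 * t) μ j • h t)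
  map_add' f g := by simp [Phi, Finset.sum_add_distrib]
  map_smul' a f := by
    simp only [Phi, Finset.smul_sum, map_smul, Pi.smul_apply, RingHom.id_apply]
    refine Finset.sum_congr rfl fun t ht => Finset.sum_congr rfl fun j hj => ?_
    rw [smul_comm]

theorem Psi_apply (r : ℕ) (μ : ℝ) (h : ℕ → Finset (Fin n) → ℝ) :
    Psi n r μ h = Phi n r (fun t j => pco (n - 2 * t) μ j • h t) := rfl

theorem Psi_mem (r : ℕ) (hr : 2 * r ≤ n) (μ : ℝ) (h : (t : TT n r μ) → H n t.1) :
    Psi n r μ (iota n r μ h) ∈ EE n r μ := by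
  rw [Psi_apply, Phi_mem_EE r hr μ _ (fun t j => Submodule.smul_mem _ _ (iota_mem r μ h t))]
  apply res_ok r hr
  intro t ht hμ
  apply iota_neg
  rw [mem_TT]
  tauto

theorem finrank_EE (r : ℕ) (hr : 2 * r ≤ n) (μ : ℝ) :
    Module.finrank ℝ (EE n r μ) = ∑ t ∈ TT n r μ, dimV n t := by
  let Θ : ((t : TT n r μ) → H n t.1) →ₗ[ℝ] EE n r μ :=
    (Psi n r μ ∘ₗ iota n r μ).codRestrict (EE n r μ) (fun h => Psi_mem r hr μ h)
  have hinj : Function.Injective Θ := by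
    rw [injective_iff_map_eq_zero]
    intro h h0
    have h1 : Psi n r μ (iota n r μ h) = 0 := congrArg Subtype.val h0
    have h2 := Phi_indep r hr _ (fun t j => Submodule.smul_mem _ _ (iota_mem r μ h t)) h1
    ext1 ⟨t, ht⟩
    have h3 := h2 t 0 (by have := (mem_TT r μ t).mp ht; omega)
    simp only [pco_zero, one_smul] at h3
    rw [iota_pos r μ h t ht] at h3
    exact Subtype.ext h3
  have hsurj : Function.Surjective Θ := by
    rintro ⟨f, hf⟩
    obtain ⟨c, hc, rfl⟩ := Phi_span r hr f hf.1
    have h1 := res_sol r hr μ c ((Phi_mem_EE r hr μ c hc).mp hf)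
    refine ⟨fun t => ⟨c t.1 0, hc _ _⟩, Subtype.ext ?_⟩
    change Psi n r μ (iota n r μ _) = _
    rw [Psi_apply]
    apply Phi_congr
    intro t j htj
    obtain ⟨h2, h3⟩ := h1 t (by omega)
    rw [h2 j htj]
    congr 1
    by_cases ht : t ∈ TT n r μ
    · rw [iota_pos r μ _ t ht]
    · rw [iota_neg r μ _ t ht, h3]
      intro hμ
      exact ht ((mem_TT r μ t).mpr ⟨by omega, hμ⟩)
  rw [← (LinearEquiv.ofBijective Θ ⟨hinj, hsurj⟩).finrank_eq, Module.finrank_pi_fintype,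
    ← Finset.sum_coe_sort (TT n r μ) (fun t => dimV n t)]
  refine Fintype.sum_congr _ _ fun t => ?_
  exact finrank_H t.1 (by have := (mem_TT r μ t.1).mp t.2; omega)

/-! Transport to the Boolean ball -/

def ch (S : Finset (Fin n)) : Fin n → Bool := fun i => decide (i ∈ S)
def supp (x : Fin n → Bool) : Finset (Fin n) := Finset.univ.filter (fun i => x i = true)

theorem supp_ch (S : Finset (Fin n)) : supp (ch S) = S := by ext; simp [supp, ch]
theorem ch_supp (x : Fin n → Bool) : ch (supp x) = x := by ext; simp [supp, ch]
theorem wt_eq (x : Fin n → Bool) : wt x = (supp x).card := rfl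
theorem wt_ch (S : Finset (Fin n)) : wt (ch S) = S.card := by rw [wt_eq, supp_ch]

theorem dist_eq (x y : Fin n → Bool) : hammingDist x y = (symmDiff (supp x) (supp y)).card := by
  unfold hammingDist
  congr 1
  ext i
  simp only [supp, Finset.mem_filter, Finset.mem_univ, true_and, Finset.mem_symmDiff]
  cases x i <;> cases y i <;> simp

theorem sum_nbr (g : Finset (Fin n) → ℝ) (S : Finset (Fin n)) :
    (∑ T, if (symmDiff S T).card = 1 then g T else 0) = U n g S + D n g S := by
  have h1 : (∑ T, if (symmDiff S T).card = 1 then g T else 0)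
      = ∑ T : Finset (Fin n), if T.card = 1 then g (symmDiff S T) else 0 := by
    refine Finset.sum_bij' (fun T _ => symmDiff S T) (fun T _ => symmDiff S T) ?_ ?_ ?_ ?_ ?_ <;> simp
  have h2 : (∑ T : Finset (Fin n), if T.card = 1 then g (symmDiff S T) else 0)
      = ∑ i, g (symmDiff S {i}) := by
    rw [← Finset.sum_filter]
    symm
    refine Finset.sum_bij (fun i _ => {i}) ?_ ?_ ?_ ?_
    · simp
    · simp
    · intro T hT
      simp only [Finset.mem_filter, Finset.mem_univ, true_and, Finset.card_eq_one] at hT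
      obtain ⟨i, rfl⟩ := hT
      exact ⟨i, by simp, rfl⟩
    · simp
  rw [h1, h2, ← Finset.sum_add_sum_compl S, U_apply, D_apply]
  congr 1
  · refine Finset.sum_congr rfl fun i hi => ?_
    congr 1
    ext j
    by_cases hj : j = i
    · subst hj; simp [Finset.mem_symmDiff, hi]
    · simp [Finset.mem_symmDiff, hj]
  · refine Finset.sum_congr rfl fun i hi => ?_
    rw [Finset.mem_compl] at hi
    congr 1
    ext j
    by_cases hj : j = i
    · subst hj; simp [Finset.mem_symmDiff, hi]
    · simp [Finset.mem_symmDiff, hj]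

abbrev BT (n r : ℕ) := {x : Fin n → Bool // wt x ≤ r}

def ext0 {r : ℕ} (v : BT n r → ℝ) (S : Finset (Fin n)) : ℝ :=
  if h : S.card ≤ r then v ⟨ch S, by rw [wt_ch]; exact h⟩ else 0

theorem ext0_supp {r : ℕ} (v : BT n r → ℝ) (x : BT n r) : ext0 v (supp x.1) = v x := by
  unfold ext0
  rw [dif_pos (by rw [← wt_eq]; exact x.2)]
  congr 1
  exact Subtype.ext (ch_supp x.1)

theorem mulVec_eq {r : ℕ} (v : BT n r → ℝ) (x : BT n r) :
    Matrix.toLin' (ballAdj n r) v x = U n (ext0 v) (supp x.1) + D n (ext0 v) (supp x.1) := by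
  rw [← sum_nbr, Matrix.toLin'_apply]
  have h1 : (ballAdj n r).mulVec v x
      = ∑ y : BT n r, if (symmDiff (supp x.1) (supp y.1)).card = 1 then ext0 v (supp y.1) else 0 := by
    unfold Matrix.mulVec dotProduct
    refine Finset.sum_congr rfl fun y _ => ?_
    rw [ext0_supp, ← dist_eq]
    simp [ballAdj]
  rw [h1]
  refine Finset.sum_bij_ne_zero (fun y _ _ => supp y.1) ?_ ?_ ?_ ?_
  · simp
  · intro a _ _ b _ _ hab
    apply Subtype.ext
    rw [← ch_supp a.1, ← ch_supp b.1]
    exact congrArg ch hab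
  · intro T _ hT
    have hc : T.card ≤ r := by
      by_contra hc
      apply hT
      simp [ext0, hc]
    refine ⟨⟨ch T, by rw [wt_ch]; exact hc⟩, Finset.mem_univ _, ?_, supp_ch T⟩
    simp only [supp_ch]
    exact hT
  · intro y _ _
    rfl

theorem finrank_eig (r : ℕ) (μ : ℝ) :
    Module.finrank ℝ (Module.End.eigenspace (Matrix.toLin' (ballAdj n r)) μ)
      = Module.finrank ℝ (EE n r μ) := by
  have hE : ∀ v : BT n r → ℝ, v ∈ Module.End.eigenspace (Matrix.toLin' (ballAdj n r)) μ →
      ext0 v ∈ EE n r μ := by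
    intro v hv
    rw [Module.End.mem_eigenspace_iff] at hv
    refine ⟨fun S hS => by simp [ext0, show ¬ S.card ≤ r by omega], fun S hS => ?_⟩
    have h1 := mulVec_eq v ⟨ch S, by rw [wt_ch]; exact hS⟩
    rw [hv] at h1
    simp only [supp_ch] at h1
    rw [← h1]
    simp [ext0, hS]
  let e : Module.End.eigenspace (Matrix.toLin' (ballAdj n r)) μ ≃ₗ[ℝ] EE n r μ :=
    { toFun := fun v => ⟨ext0 v.1, hE v.1 v.2⟩
      invFun := fun f => ⟨fun x => f.1 (supp x.1), by
        rw [Module.End.mem_eigenspace_iff]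
        have h0 : ext0 (fun x : BT n r => f.1 (supp x.1)) = f.1 := by
          ext S
          by_cases h : S.card ≤ r
          · simp [ext0, h, supp_ch]
          · simp [ext0, h, f.2.1 S (by omega)]
        ext x
        rw [mulVec_eq, h0, f.2.2 _ (by rw [← wt_eq]; exact x.2)]
        rfl⟩
      map_add' := fun v w => by
        apply Subtype.ext
        ext S
        by_cases h : S.card ≤ r <;> simp [ext0, h]
      map_smul' := fun a v => by
        apply Subtype.ext
        ext S
        by_cases h : S.card ≤ r <;> simp [ext0, h]
      left_inv := fun v => by
        apply Subtype.ext
        ext x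
        exact ext0_supp v.1 x
      right_inv := fun f => by
        apply Subtype.ext
        ext S
        by_cases h : S.card ≤ r
        · simp [ext0, h, supp_ch]
        · simp [ext0, h, f.2.1 S (by omega)] }
  exact e.finrank_eq

theorem main_finrank (r : ℕ) (hr : 2 * r ≤ n) (μ : ℝ) :
    Module.finrank ℝ (Module.End.eigenspace (Matrix.toLin' (ballAdj n r)) μ)
      = ∑ t ∈ (Finset.range (r + 1)).filter (fun t => μ ∈ krawLambda n r t), dimV n t := by
  rw [finrank_eig, finrank_EE r hr]; rfl

end BallSpec

theorem ball_spectrum (n r : ℕ) (hn : 0 < n) (hr : 2 * r ≤ n) :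
    (∀ t ≤ r, ∀ μ ∈ krawLambda n r t,
        Module.End.HasEigenvalue (Matrix.toLin' (ballAdj n r)) μ) ∧
    ∀ μ : ℝ, Module.End.HasEigenvalue (Matrix.toLin' (ballAdj n r)) μ →
      (∃ t ≤ r, μ ∈ krawLambda n r t) ∧
        Module.finrank ℝ (Module.End.eigenspace (Matrix.toLin' (ballAdj n r)) μ) =
          ∑ t ∈ (Finset.range (r + 1)).filter (fun t => μ ∈ krawLambda n r t), dimV n t := by
  refine ⟨fun t ht μ hμ => ?_, fun μ hμ => ⟨?_, BallSpec.main_finrank r hr μ⟩⟩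
  · intro h0
    have h1 := BallSpec.main_finrank r hr μ
    have h2 : Module.finrank ℝ (Module.End.eigenspace (Matrix.toLin' (ballAdj n r)) μ) = 0 := by
      rw [show Module.End.eigenspace (Matrix.toLin' (ballAdj n r)) μ = ⊥ from h0]
      simp
    rw [h2] at h1
    have h3 := (Finset.sum_eq_zero_iff.mp h1.symm) t
      (Finset.mem_filter.mpr ⟨Finset.mem_range.mpr (by omega), hμ⟩)
    have := BallSpec.dimV_pos (n := n) t (by omega)
    omega
  · by_contra hc
    push Not at hc
    have h1 := BallSpec.main_finrank r hr μ
    rw [Finset.sum_eq_zero (fun t ht => by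
      rw [Finset.mem_filter, Finset.mem_range] at ht
      exact absurd ht.2 (hc t (by omega)))] at h1
    exact hμ (Submodule.finrank_eq_zero.mp h1)
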